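/- Let a and b be two distinct positive integers, and define the sequence (t_n)_{n≥1} by t_n = a if the sum of the binary digits of n is odd and t_n = b if the sum of the binary digits of n is even (the Thue–Morse sequence on the alphabet {a, b}). Then the real number [0; t₁, t₂, t₃, …] is transcendental. -/

import Mathlib

open Filter Topology

/-- Numerators of the convergents of `[0; t 1, t 2, ...]`. -/
def cfNum (t : ℕ → ℕ) : ℕ → ℕ
  | 0 => 0
  | 1 => 1
  | n + 2 => t (n + 2) * cfNum t (n + 1) + cfNum t n

/-- Denominators of the convergents of `[0; t 1, t 2, ...]`. -/
def cfDen (t : ℕ → ℕ) : ℕ → ℕ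
  | 0 => 1
  | 1 => t 1
  | n + 2 => t (n + 2) * cfDen t (n + 1) + cfDen t n

/-!
Roth's argument becomes much simpler for approximations `x k` to `ρ` whose scales satisfy
`Q (k + 1) ≍ Q k ^ d`. Indeed, integers `r h` and `G h` with `d ^ G h * r h` independent of `h` make
`Q (k + G h) ^ r h` of the same order for all `h`, so one auxiliary polynomial of multidegree `r`,
with integer coefficients and vanishing to high index at `(ρ, …, ρ)`, can be evaluated at the points
`(x (k + G h))_h` for all `k`. As the polynomial is fixed, its height is irrelevant, and instead of
Roth's lemma it suffices that a low-order derivative does not vanish for large `k`, which follows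
from a Wronskian argument in one variable at a time.

For the Thue–Morse continued fraction, the products of the matrices `!![n, 1; 1, 0]` over the first
`2 ^ (2 * k + 1)` letters obey a trace map. The ratio of their antisymmetric to their symmetric part
is a rational number `x k = ∏ j < k, w j / (w j + 2)`. The scale `σ` of the matrix entries satisfies
`σ (k + 1) ≍ σ k ^ 4`, whereas `x k` has denominator `O(σ k ^ (3 / 4))` and converges with error
`O(σ k ^ (-2))`, giving the exponent `8 / 3 > 2`. The limit is a rational function of `α` with
rational coefficients, so `α` is transcendental as well.
-/

open Polynomial Asymptotics

lemma eq_zero_of_wronskian_eq_zero {K : Type*} [Field K] [CharZero K] {e f : K[X]} {x : K}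
    (he : ¬ e.IsRoot x) (hf : f.IsRoot x) (hw : wronskian e f = 0) : f = 0 := by
  by_contra hf0
  have he0 : e ≠ 0 := by rintro rfl; simp at he
  have hdf : derivative f ≠ 0 := fun h ↦ by
    rw [eq_C_of_derivative_eq_zero h] at hf hf0
    simp_all
  have hmult : (e * derivative f).rootMultiplicity x = f.rootMultiplicity x - 1 := by
    rw [rootMultiplicity_mul (mul_ne_zero he0 hdf), rootMultiplicity_eq_zero he, zero_add,
      derivative_rootMultiplicity_of_root hf]
  have hpos : 0 < f.rootMultiplicity x := (rootMultiplicity_pos hf0).mpr hf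
  have heq : e * derivative f = derivative e * f := sub_eq_zero.mp hw
  rw [heq, rootMultiplicity_mul (heq ▸ mul_ne_zero he0 hdf)] at hmult
  omega

lemma pow_dvd_wronskian_of_pow_succ_dvd {R : Type*} [CommRing R] {e f p : R[X]} {s : ℕ}
    (h : p ^ (s + 1) ∣ f) : p ^ s ∣ wronskian e f :=
  dvd_sub (Dvd.dvd.mul_left (pow_sub_one_dvd_derivative_of_pow_dvd h) _)
    (Dvd.dvd.mul_left ((pow_dvd_pow _ s.le_succ).trans h) _)

-- Induction on the dimension: `f ↦ wronskian e f` kills `e`, and lowers orders of vanishing by at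
-- most one.
lemma exists_finset_eq_zero_of_pow_dvd {K : Type*} [Field K] [CharZero K] {s : ℕ}
    (V : Submodule K K[X]) [Module.Finite K V] (hV : Module.finrank K V ≤ s) :
    ∃ S : Finset K, ∀ x ∉ S, ∀ f ∈ V, (X - C x) ^ s ∣ f → f = 0 := by
  classical
  induction s generalizing V with
  | zero =>
    obtain rfl : V = ⊥ := Submodule.finrank_eq_zero.mp (Nat.le_zero.mp hV)
    exact ⟨∅, fun x _ f hf _ ↦ by simpa using hf⟩
  | succ s ih =>
    obtain rfl | hbot := eq_or_ne V ⊥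
    · exact ⟨∅, fun x _ f hf _ ↦ by simpa using hf⟩
    obtain ⟨e, heV, he0⟩ : ∃ e ∈ V, e ≠ 0 := Submodule.exists_mem_ne_zero_of_ne_bot hbot
    let φ : V →ₗ[K] K[X] := (wronskianBilin K e).domRestrict V
    have heφ : (⟨e, heV⟩ : V) ∈ LinearMap.ker φ := wronskian_self_eq_zero e
    have hker : LinearMap.ker φ ≠ ⊥ :=
      (Submodule.ne_bot_iff _).mpr ⟨_, heφ, by simpa using he0⟩
    have hrank := φ.finrank_range_add_finrank_ker
    have := Submodule.one_le_finrank_iff.mpr hker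
    obtain ⟨S, hS⟩ := ih (LinearMap.range φ) (by omega)
    refine ⟨S ∪ e.roots.toFinset, fun x hx f hf hdvd ↦ ?_⟩
    simp only [Finset.mem_union, not_or, Multiset.mem_toFinset, mem_roots he0] at hx
    refine eq_zero_of_wronskian_eq_zero hx.2
      (dvd_iff_isRoot.mp ((dvd_pow_self _ s.succ_ne_zero).trans hdvd)) ?_
    exact hS x hx.1 _ ⟨⟨f, hf⟩, rfl⟩ (pow_dvd_wronskian_of_pow_succ_dvd hdvd)

lemma X_sub_C_pow_dvd_iff_eval_hasseDeriv {R : Type*} [CommRing R] {n : ℕ} {f : R[X]} {x : R} :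
    (X - C x) ^ n ∣ f ↔ ∀ d < n, (hasseDeriv d f).eval x = 0 := by
  simp_rw [X_sub_C_pow_dvd_iff, X_pow_dvd_iff, ← taylor_apply, taylor_coeff]

/-- The multi-indices `i` with `i h ≤ r h` for all `h`. They index the coefficients of a polynomial
of multidegree at most `r`. -/
abbrev BoxIndex {ι : Type*} (r : ι → ℕ) : Type _ := ∀ h, Fin (r h + 1)

section HasseEval

variable {ι K L : Type*} [Fintype ι] [DecidableEq ι]

/-- The value at `x` of the Hasse derivative of order `j` of the polynomial of multidegree at most
`r` with coefficients `c`. The truncated exponent `i h - j h` only matters for `j h ≤ i h`, since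
the binomial coefficient vanishes otherwise. -/
def hasseEval [CommSemiring K] (r : ι → ℕ) (c : BoxIndex r → K) (j : ι → ℕ) (x : ι → K) : K :=
  ∑ i : BoxIndex r, c i * ∏ h, ((i h : ℕ).choose (j h) : K) * x h ^ ((i h : ℕ) - j h)

lemma map_hasseEval [CommSemiring K] [CommSemiring L] (φ : K →+* L) (r : ι → ℕ)
    (c : BoxIndex r → K) (j : ι → ℕ) (x : ι → K) :
    φ (hasseEval r c j x) = hasseEval r (fun i ↦ φ (c i)) j (fun h ↦ φ (x h)) := by
  simp [hasseEval]

lemma choose_mul_pow_eq_sum_taylor [CommRing K] {r n : ℕ} (hn : n ≤ r) (j : ℕ) (x ρ : K) :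
    (n.choose j : K) * x ^ (n - j) =
      ∑ a : Fin (r + 1), (n.choose a * ρ ^ (n - a)) *
        ((a : ℕ).choose j * (x - ρ) ^ ((a : ℕ) - j)) := by
  nontriviality K
  have hasseDeriv_eval (k : ℕ) (y : K) :
      (taylor y (X ^ n : K[X])).coeff k = n.choose k * y ^ (n - k) := by
    rw [taylor_coeff, ← monomial_one_right_eq_X_pow, hasseDeriv_monomial, eval_monomial, mul_one]
  have hdeg : (taylor ρ (X ^ n : K[X])).natDegree < r + 1 := by
    rw [natDegree_taylor, natDegree_X_pow]; omega
  rw [← hasseDeriv_eval, ← sub_add_cancel x ρ, ← taylor_taylor,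
    as_sum_range' _ (r + 1) hdeg, map_sum, finsetSum_coeff, ← Fin.sum_univ_eq_sum_range]
  refine Finset.sum_congr rfl fun a _ ↦ ?_
  rw [taylor_coeff, hasseDeriv_monomial, eval_monomial, hasseDeriv_eval, sub_add_cancel]
  ring

lemma hasseEval_eq_taylor [CommRing K] (r : ι → ℕ) (c : BoxIndex r → K) (j : ι → ℕ)
    (x ρ : ι → K) :
    hasseEval r c j x =
      hasseEval r (fun i ↦ hasseEval r c (fun h ↦ i h) ρ) j (fun h ↦ x h - ρ h) := by
  simp only [hasseEval, Finset.sum_mul]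
  rw [Finset.sum_comm]
  refine Finset.sum_congr rfl fun i _ ↦ ?_
  rw [Finset.prod_congr rfl fun h _ ↦
      choose_mul_pow_eq_sum_taylor (Nat.le_of_lt_succ (i h).2) (j h) (x h) (ρ h),
    Finset.prod_univ_sum, Fintype.piFinset_univ, Finset.mul_sum]
  refine Finset.sum_congr rfl fun a _ ↦ ?_
  rw [Finset.prod_mul_distrib, mul_assoc]

lemma exists_int_prod_den_mul_hasseEval (r : ι → ℕ) (c : BoxIndex r → ℤ) (j : ι → ℕ)
    (x : ι → ℚ) :
    ∃ z : ℤ, (∏ h, ((x h).den : ℚ) ^ r h) * hasseEval r (fun i ↦ (c i : ℚ)) j x = z := by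
  refine ⟨∑ i : BoxIndex r, c i * ∏ h, (((i h : ℕ).choose (j h) : ℤ) *
    ((x h).num ^ ((i h : ℕ) - j h) * (x h).den ^ (r h - ((i h : ℕ) - j h)))), ?_⟩
  push_cast
  rw [hasseEval, Finset.mul_sum]
  refine Finset.sum_congr rfl fun i _ ↦ ?_
  rw [mul_left_comm, ← Finset.prod_mul_distrib]
  congr 1
  refine Finset.prod_congr rfl fun h _ ↦ ?_
  have hle : (i h : ℕ) - j h ≤ r h := (Nat.sub_le _ _).trans (Nat.le_of_lt_succ (i h).2)
  rw [← Rat.mul_den_eq_num, mul_pow, ← pow_mul_pow_sub _ hle]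
  ring

end HasseEval

section Nonvanishing

variable {K : Type*} {m : ℕ}

/-- The polynomial in the first variable obtained from the polynomial with coefficients `c` by
taking the Hasse derivative of order `j` in the other variables and evaluating these at `x`. -/
noncomputable def hasseHead [CommSemiring K] (r : Fin (m + 1) → ℕ) (c : BoxIndex r → K)
    (j : Fin m → ℕ) (x : Fin m → K) : K[X] :=
  ∑ i₀ : Fin (r 0 + 1),
    monomial i₀ (hasseEval (fun h ↦ r h.succ) (fun i ↦ c (Fin.cons i₀ i)) j x)

lemma coeff_hasseHead [CommSemiring K] (r : Fin (m + 1) → ℕ) (c : BoxIndex r → K)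
    (j : Fin m → ℕ) (x : Fin m → K) (i₀ : Fin (r 0 + 1)) :
    (hasseHead r c j x).coeff i₀ =
      hasseEval (fun h ↦ r h.succ) (fun i ↦ c (Fin.cons i₀ i)) j x := by
  simp [hasseHead, finsetSum_coeff, coeff_monomial, Fin.val_inj]

lemma eval_hasseDeriv_hasseHead [CommSemiring K] (r : Fin (m + 1) → ℕ) (c : BoxIndex r → K)
    (d : ℕ) (j : Fin m → ℕ) (x : Fin (m + 1) → K) :
    (hasseDeriv d (hasseHead r c j fun h ↦ x h.succ)).eval (x 0) =
      hasseEval r c (Fin.cons d j : Fin (m + 1) → ℕ) x := by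
  simp only [hasseHead, map_sum, hasseDeriv_monomial, eval_finsetSum, eval_monomial]
  rw [hasseEval, ← (Fin.consEquiv fun h ↦ Fin (r h + 1)).sum_comp, Fintype.sum_prod_type]
  refine Finset.sum_congr rfl fun i₀ _ ↦ ?_
  rw [hasseEval, Finset.mul_sum, Finset.sum_mul]
  refine Finset.sum_congr rfl fun i _ ↦ ?_
  simp only [Fin.consEquiv, Equiv.coe_fn_mk, Fin.prod_univ_succ, Fin.cons_zero, Fin.cons_succ]
  ring

lemma hasseHead_mem_span [CommSemiring K] (r : Fin (m + 1) → ℕ) (c : BoxIndex r → K)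
    (j : Fin m → ℕ) (x : Fin m → K) :
    hasseHead r c j x ∈ Submodule.span K (Set.range fun i : BoxIndex (fun h : Fin m ↦ r h.succ) ↦
      ∑ i₀ : Fin (r 0 + 1), monomial (i₀ : ℕ) (c (Fin.cons i₀ i))) := by
  simp only [hasseHead, hasseEval, map_sum]
  rw [Finset.sum_comm]
  refine Submodule.sum_mem _ fun i _ ↦ ?_
  simp only [mul_comm (c _), ← smul_eq_mul, ← smul_monomial, ← Finset.smul_sum]
  exact Submodule.smul_mem _ _ (Submodule.subset_span ⟨i, rfl⟩)

lemma exists_finset_hasseHead_eq_zero [Field K] [CharZero K] (r : Fin (m + 1) → ℕ)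
    (c : BoxIndex r → K) :
    ∃ S : Finset K, ∀ x₀ ∉ S, ∀ (j : Fin m → ℕ) (x : Fin m → K),
      (∀ d < ∏ h : Fin m, (r h.succ + 1), (hasseDeriv d (hasseHead r c j x)).eval x₀ = 0) →
        hasseHead r c j x = 0 := by
  let rows (i : BoxIndex fun h : Fin m ↦ r h.succ) : K[X] :=
    ∑ i₀ : Fin (r 0 + 1), monomial (i₀ : ℕ) (c (Fin.cons i₀ i))
  have : Module.Finite K (Submodule.span K (Set.range rows)) :=
    .span_of_finite K (Set.finite_range rows)
  have hrank : Module.finrank K (Submodule.span K (Set.range rows)) ≤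
      ∏ h : Fin m, (r h.succ + 1) := by
    simpa [Set.finrank, Fintype.card_pi] using finrank_range_le_card (R := K) rows
  obtain ⟨S, hS⟩ := exists_finset_eq_zero_of_pow_dvd _ hrank
  exact ⟨S, fun x₀ hx₀ j x hd ↦ hS x₀ hx₀ _ (hasseHead_mem_span r c j x)
    (X_sub_C_pow_dvd_iff_eval_hasseDeriv.mpr hd)⟩

theorem eventually_exists_hasseEval_ne_zero [Field K] [CharZero K] {κ : Type*} {l : Filter κ}
    (r : Fin m → ℕ) {c : BoxIndex r → K} (hc : c ≠ 0) {x : Fin m → κ → K}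
    (hx : ∀ h, Tendsto (x h) l cofinite) :
    ∀ᶠ k in l, ∃ j : Fin m → ℕ, (∀ h, j h < ∏ h' ∈ Finset.Ioi h, (r h' + 1)) ∧
      hasseEval r c j (fun h ↦ x h k) ≠ 0 := by
  induction m with
  | zero =>
    refine Eventually.of_forall fun k ↦ ⟨Fin.elim0, fun h ↦ h.elim0, fun h0 ↦ hc ?_⟩
    ext i
    rw [hasseEval, Fintype.sum_subsingleton _ i] at h0
    simpa using h0
  | succ m ih =>
    obtain ⟨i, hi⟩ := Function.ne_iff.mp hc
    have hc' : (fun i' : BoxIndex fun h : Fin m ↦ r h.succ ↦ c (Fin.cons (i 0) i')) ≠ 0 :=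
      fun h0 ↦ hi (by simpa using congrFun h0 (Fin.tail i))
    obtain ⟨S, hS⟩ := exists_finset_hasseHead_eq_zero r c
    have hxS : ∀ᶠ k in l, x 0 k ∉ S :=
      (hx 0).eventually S.finite_toSet.eventually_cofinite_notMem
    filter_upwards [ih _ hc' fun h ↦ hx h.succ, hxS] with k ⟨j, hj, hne⟩ hkS
    by_contra! hvanish
    have hhead : hasseHead r c j (fun h ↦ x h.succ k) = 0 := by
      refine hS _ hkS _ _ fun d hd ↦ ?_
      rw [eval_hasseDeriv_hasseHead r c d j fun h ↦ x h k]
      refine hvanish _ (Fin.cases ?_ fun h ↦ ?_)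
      · simpa [Fin.prod_Ioi_zero] using hd
      · simpa [Fin.prod_Ioi_succ] using hj h
    exact hne (by rw [← coeff_hasseHead, hhead, coeff_zero])

end Nonvanishing

section SecondMoment

variable {ι : Type*} [Fintype ι] [DecidableEq ι]

lemma sum_pi_mul_eq_zero {α : ι → Type*} [∀ h, Fintype (α h)] {R : Type*} [CommSemiring R]
    {y : ∀ h, α h → R} {h h' : ι} (hne : h' ≠ h) (hy : ∑ a, y h a = 0) :
    ∑ i : ∀ h, α h, y h (i h) * y h' (i h') = 0 := by
  rw [← (Equiv.piSplitAt h α).symm.sum_comp, Fintype.sum_prod_type_right]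
  refine Finset.sum_eq_zero fun i _ ↦ ?_
  simp [Equiv.piSplitAt, hne, ← Finset.sum_mul, hy]

lemma sum_pi_sum_sq_le {α : ι → Type*} [∀ h, Fintype (α h)] {y : ∀ h, α h → ℝ} {B : ℝ}
    (hy : ∀ h, ∑ a, y h a = 0) (hB : ∀ h a, y h a ^ 2 ≤ B) :
    ∑ i : ∀ h, α h, (∑ h, y h (i h)) ^ 2 ≤
      Fintype.card (∀ h, α h) * (Fintype.card ι * B) := by
  have hdiag (h : ι) : ∑ h', ∑ i : ∀ h, α h, y h (i h) * y h' (i h') =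
      ∑ i : ∀ h, α h, y h (i h) ^ 2 := by
    rw [Fintype.sum_eq_single h fun h' hne ↦ sum_pi_mul_eq_zero hne (hy h)]
    simp only [sq]
  calc
    _ = ∑ h, ∑ h', ∑ i : ∀ h, α h, y h (i h) * y h' (i h') := by
      simp only [sq, Finset.sum_mul_sum]
      rw [Finset.sum_comm]
      exact Finset.sum_congr rfl fun h _ ↦ Finset.sum_comm
    _ = ∑ i : ∀ h, α h, ∑ h, y h (i h) ^ 2 := by
      rw [Finset.sum_comm (s := Finset.univ (α := ∀ h, α h))]
      exact Finset.sum_congr rfl fun h _ ↦ hdiag h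
    _ ≤ ∑ _i : ∀ h, α h, ∑ _h : ι, B := by gcongr; exact hB _ _
    _ = _ := by simp

lemma sum_fin_div_sub_half {r : ℕ} (hr : r ≠ 0) :
    ∑ a : Fin (r + 1), ((a : ℝ) / r - 1 / 2) = 0 := by
  have hgauss : (∑ a ∈ Finset.range (r + 1), (a : ℝ)) * 2 = (r + 1) * r := by
    rw [← Nat.cast_sum]
    exact_mod_cast Finset.sum_range_id_mul_two (r + 1)
  rw [Fin.sum_univ_eq_sum_range fun a ↦ (a : ℝ) / r - 1 / 2, Finset.sum_sub_distrib,
    ← Finset.sum_div, eq_div_of_mul_eq two_ne_zero hgauss]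
  have : (r : ℝ) ≠ 0 := mod_cast hr
  simp only [Finset.sum_const, Finset.card_range, nsmul_eq_mul, Nat.cast_add, Nat.cast_one]
  field_simp
  ring

-- Chebyshev's inequality for independent uniform variables `i h / r h` of mean `1 / 2`.
lemma card_boxIndex_sum_div_le {r : ι → ℕ} (hr : ∀ h, r h ≠ 0) {ε : ℝ} (hε : 0 ≤ ε) :
    ((Finset.univ.filter fun i : BoxIndex r ↦
        ∑ h, (i h : ℝ) / r h ≤ (1 / 2 - ε) * Fintype.card ι).card : ℝ) *
      (4 * ε ^ 2 * Fintype.card ι) ≤ Fintype.card (BoxIndex r) := by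
  set S := Finset.univ.filter fun i : BoxIndex r ↦
    ∑ h, (i h : ℝ) / r h ≤ (1 / 2 - ε) * Fintype.card ι
  obtain hm | hm := (Nat.cast_nonneg (α := ℝ) (Fintype.card ι)).eq_or_lt
  · simp only [← hm, mul_zero, Nat.cast_nonneg]
  have hvar : ∑ i : BoxIndex r, (∑ h, ((i h : ℝ) / r h - 1 / 2)) ^ 2 ≤
      Fintype.card (BoxIndex r) * (Fintype.card ι * (1 / 4)) := by
    refine sum_pi_sum_sq_le (y := fun h (a : Fin (r h + 1)) ↦ (a : ℝ) / r h - 1 / 2)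
      (fun h ↦ sum_fin_div_sub_half (hr h)) fun h a ↦ ?_
    have h1 : (a : ℝ) / r h ≤ 1 :=
      div_le_one_of_le₀ (mod_cast Nat.le_of_lt_succ a.2) (Nat.cast_nonneg _)
    have h0 : 0 ≤ (a : ℝ) / r h := by positivity
    nlinarith
  have hdev : ∀ i ∈ S, (ε * Fintype.card ι) ^ 2 ≤ (∑ h, ((i h : ℝ) / r h - 1 / 2)) ^ 2 := by
    intro i hi
    have hi := (Finset.mem_filter.mp hi).2
    rw [← neg_sq (∑ h, _)]
    gcongr
    simp only [Finset.sum_sub_distrib, Finset.sum_const, Finset.card_univ, nsmul_eq_mul]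
    linarith
  have hcheb : (S.card : ℝ) * (ε * Fintype.card ι) ^ 2 ≤
      Fintype.card (BoxIndex r) * (Fintype.card ι * (1 / 4)) :=
    calc _ ≤ ∑ i ∈ S, (∑ h, ((i h : ℝ) / r h - 1 / 2)) ^ 2 := by
          simpa using S.card_nsmul_le_sum _ _ hdev
      _ ≤ _ := (Finset.sum_le_univ_sum_of_nonneg fun _ ↦ sq_nonneg _).trans hvar
  refine le_of_mul_le_mul_right ?_ hm
  linarith

end SecondMoment

section AuxiliaryPolynomial

lemma exists_int_ne_zero_sum_smul_eq_zero {α β M : Type*} [Fintype α] [Fintype β]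
    [AddCommGroup M] [Module ℚ M] [Module.Finite ℚ M] (A : β → α → M)
    (hcard : Fintype.card β * Module.finrank ℚ M < Fintype.card α) :
    ∃ c : α → ℤ, c ≠ 0 ∧ ∀ j, ∑ i, c i • A j i = 0 := by
  let φ : (α → ℚ) →ₗ[ℚ] (β → M) := LinearMap.pi fun j ↦ Fintype.linearCombination ℚ (A j)
  have hker : LinearMap.ker φ ≠ ⊥ := φ.ker_ne_bot_of_finrank_lt <| by
    simpa [Module.finrank_pi_fintype] using hcard
  obtain ⟨v, hv, hv0⟩ := (Submodule.ne_bot_iff _).mp hker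
  obtain ⟨N, hN⟩ := IsLocalization.exist_integer_multiples_of_finite (nonZeroDivisors ℤ) v
  choose c hc using hN
  have hc (i : α) : (c i : ℚ) = (N : ℤ) * v i := by simpa using hc i
  refine ⟨c, fun h0 ↦ hv0 (funext fun i ↦ ?_), fun j ↦ ?_⟩
  · simpa [h0] using hc i
  · have hj : ∑ i, v i • A j i = 0 := by
      simpa [φ, Fintype.linearCombination_apply] using congrFun hv j
    simp only [← Int.cast_smul_eq_zsmul ℚ, hc, mul_smul, ← Finset.smul_sum, hj, smul_zero]

variable {ι : Type*} [Fintype ι] [DecidableEq ι]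

lemma exists_int_hasseEval_eq_zero {K : Type*} [Field K] [CharZero K] [Module.Finite ℚ K]
    {r : ι → ℕ} (S : Finset (BoxIndex r)) (x : ι → K)
    (hS : S.card * Module.finrank ℚ K < Fintype.card (BoxIndex r)) :
    ∃ c : BoxIndex r → ℤ, c ≠ 0 ∧
      ∀ i ∈ S, hasseEval r (fun a ↦ (c a : K)) (fun h ↦ i h) x = 0 := by
  obtain ⟨c, hc0, hc⟩ := exists_int_ne_zero_sum_smul_eq_zero
    (fun (i : S) (a : BoxIndex r) ↦
      ∏ h, ((a h : ℕ).choose (i.1 h) : K) * x h ^ ((a h : ℕ) - i.1 h)) (by simpa using hS)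
  exact ⟨c, hc0, fun i hi ↦ by simpa only [hasseEval, zsmul_eq_mul] using hc ⟨i, hi⟩⟩

lemma exists_int_hasseEval_eq_zero_of_isAlgebraic {ρ : ℝ} (hρ : IsAlgebraic ℚ ρ) {r : ι → ℕ}
    (hr : ∀ h, r h ≠ 0) {ε : ℝ} (hε : 0 ≤ ε)
    (hdeg : Module.finrank ℚ (IntermediateField.adjoin ℚ {ρ}) < 4 * ε ^ 2 * Fintype.card ι) :
    ∃ c : BoxIndex r → ℤ, c ≠ 0 ∧ ∀ i : BoxIndex r,
      ∑ h, (i h : ℝ) / r h ≤ (1 / 2 - ε) * Fintype.card ι →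
        hasseEval r (fun a ↦ (c a : ℝ)) (fun h ↦ i h) (fun _ ↦ ρ) = 0 := by
  let K := IntermediateField.adjoin ℚ {ρ}
  have : Module.Finite ℚ K := IntermediateField.adjoin.finiteDimensional hρ.isIntegral
  set S := Finset.univ.filter fun i : BoxIndex r ↦
    ∑ h, (i h : ℝ) / r h ≤ (1 / 2 - ε) * Fintype.card ι
  have hS : S.card * Module.finrank ℚ K < Fintype.card (BoxIndex r) := by
    obtain h0 | hpos := S.card.eq_zero_or_pos
    · simp [h0]
    · exact_mod_cast (mul_lt_mul_of_pos_left hdeg (Nat.cast_pos.mpr hpos)).trans_le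
        (card_boxIndex_sum_div_le hr hε)
  obtain ⟨c, hc0, hc⟩ := exists_int_hasseEval_eq_zero S
    (fun _ ↦ IntermediateField.AdjoinSimple.gen ℚ ρ) hS
  refine ⟨c, hc0, fun i hi ↦ ?_⟩
  simpa using (map_hasseEval (algebraMap K ℝ) r _ _ _).symm.trans
    (congrArg (algebraMap K ℝ) (hc i (Finset.mem_filter.mpr ⟨Finset.mem_univ i, hi⟩)))

end AuxiliaryPolynomial

section Criterion

lemma exists_prod_Ioi_le {f g : ℕ → ℝ} (hf : Tendsto f atTop atTop) (m : ℕ) :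
    ∃ e : Fin m → ℕ, ∀ h, ∏ h' ∈ Finset.Ioi h, g (e h') ≤ f (e h) := by
  induction m with
  | zero => exact ⟨Fin.elim0, fun h ↦ h.elim0⟩
  | succ m ih =>
    obtain ⟨e, he⟩ := ih
    obtain ⟨n, hn⟩ := (hf.eventually_ge_atTop (∏ h, g (e h))).exists
    refine ⟨Fin.cons n e, Fin.cases ?_ fun h ↦ ?_⟩
    · simpa [Fin.prod_Ioi_zero] using hn
    · simpa [Fin.prod_Ioi_succ] using he h

variable {ι κ : Type*} [Fintype ι] {l : Filter κ}

lemma tendsto_mul_hasseEval_zero [DecidableEq ι] {r : ι → ℕ} {c : BoxIndex r → ℝ} {ρ : ι → ℝ}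
    {w : κ → ℝ} {y : ι → κ → ℝ} {j : ι → ℕ}
    (hy : ∀ i : BoxIndex r, hasseEval r c (fun h ↦ i h) ρ ≠ 0 → (∀ h, j h ≤ i h) →
      Tendsto (fun k ↦ w k * ∏ h, (y h k - ρ h) ^ ((i h : ℕ) - j h)) l (𝓝 0)) :
    Tendsto (fun k ↦ w k * hasseEval r c j fun h ↦ y h k) l (𝓝 0) := by
  have hterm (i : BoxIndex r) : Tendsto (fun k ↦
      (hasseEval r c (fun h ↦ i h) ρ * ∏ h, ((i h : ℕ).choose (j h) : ℝ)) *
        (w k * ∏ h, (y h k - ρ h) ^ ((i h : ℕ) - j h))) l (𝓝 0) := by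
    by_cases h0 : hasseEval r c (fun h ↦ i h) ρ = 0
    · simpa only [h0, zero_mul] using tendsto_const_nhds
    by_cases hji : ∀ h, j h ≤ i h
    · simpa only [mul_zero] using (hy i h0 hji).const_mul _
    · obtain ⟨h, hh⟩ := not_forall.mp hji
      have hchoose : ∏ h, ((i h : ℕ).choose (j h) : ℝ) = 0 :=
        Finset.prod_eq_zero (Finset.mem_univ h)
          (mod_cast Nat.choose_eq_zero_of_lt (not_le.mp hh))
      simpa only [hchoose, mul_zero, zero_mul] using tendsto_const_nhds
  have hsum := tendsto_finsetSum Finset.univ fun i _ ↦ hterm i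
  rw [Finset.sum_const_zero] at hsum
  refine hsum.congr fun k ↦ ?_
  rw [hasseEval_eq_taylor r c j _ ρ]
  conv_rhs => rw [hasseEval, Finset.mul_sum]
  refine Finset.sum_congr rfl fun i _ ↦ ?_
  rw [Finset.prod_mul_distrib]
  ring

-- Multiplying by the denominators turns the value at `y` into an integer tending to zero.
lemma eventually_hasseEval_eq_zero [DecidableEq ι] {r : ι → ℕ} {c : BoxIndex r → ℤ} {ρ : ι → ℝ}
    {y : ι → κ → ℚ} {j : ι → ℕ}
    (hy : ∀ i : BoxIndex r, hasseEval r (fun a ↦ (c a : ℝ)) (fun h ↦ i h) ρ ≠ 0 →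
      (∀ h, j h ≤ i h) → Tendsto (fun k ↦
        ∏ h, ((y h k).den : ℝ) ^ r h * ((y h k : ℝ) - ρ h) ^ ((i h : ℕ) - j h)) l (𝓝 0)) :
    ∀ᶠ k in l, hasseEval r (fun a ↦ (c a : ℚ)) j (fun h ↦ y h k) = 0 := by
  simp only [Finset.prod_mul_distrib] at hy
  filter_upwards [(tendsto_mul_hasseEval_zero hy).eventually (Metric.ball_mem_nhds 0 one_pos)]
    with k hk
  obtain ⟨z, hz⟩ := exists_int_prod_den_mul_hasseEval r c j fun h ↦ y h k
  have hcast : (z : ℝ) = (∏ h, ((y h k).den : ℝ) ^ r h) *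
      hasseEval r (fun a ↦ (c a : ℝ)) j (fun h ↦ (y h k : ℝ)) := by
    have hmap := map_hasseEval (Rat.castHom ℝ) r (fun a ↦ (c a : ℚ)) j fun h ↦ y h k
    simp only [Rat.coe_castHom, Rat.cast_intCast] at hmap
    rw [← Rat.cast_intCast, ← hz, ← hmap]
    push_cast
    rfl
  have hz0 : z = 0 := by
    rw [← hcast, dist_zero_right, Real.norm_eq_abs] at hk
    exact Int.abs_lt_one_iff.mp (mod_cast hk)
  rw [hz0, Int.cast_zero, mul_eq_zero] at hz
  exact hz.resolve_left (Finset.prod_ne_zero_iff.mpr fun h _ ↦ by simp)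

lemma tendsto_prod_pow_mul_pow_zero {q : κ → ℝ} (hq : Tendsto q l atTop) {u v : ι → κ → ℝ}
    {A B : ι → ℝ} (hu : ∀ h, u h =O[l] fun k ↦ q k ^ A h) (hv : ∀ h, v h =O[l] fun k ↦ q k ^ B h)
    {r n : ι → ℕ} (hneg : ∑ h, (A h * r h + B h * n h) < 0) :
    Tendsto (fun k ↦ ∏ h, u h k ^ r h * v h k ^ n h) l (𝓝 0) := by
  have hprod : (fun k ↦ ∏ h, u h k ^ r h * v h k ^ n h) =O[l]
      fun k ↦ ∏ h, (q k ^ A h) ^ r h * (q k ^ B h) ^ n h :=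
    IsBigO.finsetProd fun h _ ↦ ((hu h).pow _).mul ((hv h).pow _)
  have hrpow : (fun k ↦ ∏ h, (q k ^ A h) ^ r h * (q k ^ B h) ^ n h) =ᶠ[l]
      fun k ↦ q k ^ ∑ h, (A h * r h + B h * n h) := by
    filter_upwards [hq.eventually_gt_atTop 0] with k hk
    simp only [← Real.rpow_mul_natCast hk.le, ← Real.rpow_add hk, Real.rpow_sum_of_pos hk]
  refine (hprod.trans_eventuallyEq hrpow).trans_tendsto ?_
  simpa only [neg_neg, Function.comp_def] using
    (tendsto_rpow_neg_atTop (neg_pos.mpr hneg)).comp hq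

section Shift

variable {Q : ℕ → ℝ} {d : ℕ}

lemma isTheta_shift (hQd : (fun k ↦ Q (k + 1)) =Θ[atTop] fun k ↦ Q k ^ d) (n : ℕ) :
    (fun k ↦ Q (k + n)) =Θ[atTop] fun k ↦ Q k ^ d ^ n := by
  induction n with
  | zero => simpa using isTheta_refl Q atTop
  | succ n ih =>
    have hstep : (fun k ↦ Q (k + n + 1)) =Θ[atTop] fun k ↦ Q (k + n) ^ d :=
      ⟨hQd.1.comp_tendsto (tendsto_add_atTop_nat n), hQd.2.comp_tendsto (tendsto_add_atTop_nat n)⟩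
    simpa only [pow_succ, pow_mul, add_assoc] using hstep.trans (ih.pow d)

lemma isBigO_rpow_shift (hQ : Tendsto Q atTop atTop)
    (hQd : (fun k ↦ Q (k + 1)) =Θ[atTop] fun k ↦ Q k ^ d) {u : ℕ → ℝ} {β : ℝ}
    (hu : u =O[atTop] fun k ↦ Q k ^ β) (n : ℕ) :
    (fun k ↦ u (k + n)) =O[atTop] fun k ↦ Q k ^ ((d : ℝ) ^ n * β) := by
  have hQ0 : 0 ≤ᶠ[atTop] Q := hQ.eventually_ge_atTop 0
  have hpow : (fun k ↦ Q (k + n) ^ β) =Θ[atTop] fun k ↦ (Q k ^ d ^ n) ^ β :=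
    (isTheta_shift hQd n).rpow ((tendsto_add_atTop_nat n).eventually hQ0)
      (hQ0.mono fun k hk ↦ pow_nonneg hk _)
  refine ((hu.comp_tendsto (tendsto_add_atTop_nat n)).trans_isTheta hpow).trans_eventuallyEq ?_
  filter_upwards [hQ0] with k hk
  rw [← Real.rpow_natCast_mul hk, Nat.cast_pow]

end Shift

lemma sum_weights_neg {w : ι → ℝ} {i j r : ι → ℕ} {D ε μ : ℝ}
    (hD : 0 < D) (hw : ∀ h, w h * r h = D) (hμ : 0 < μ) (hμε : μ * (1 / 2 - 2 * ε) = 1)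
    (hj : ∀ h, (j h : ℝ) ≤ ε * r h) (hji : ∀ h, j h ≤ i h)
    (hi : (1 / 2 - ε) * Fintype.card ι < ∑ h, (i h : ℝ) / r h) :
    ∑ h, (w h * r h + w h * -μ * ((i h - j h : ℕ) : ℝ)) < 0 := by
  have hterm (h : ι) : w h * r h + w h * -μ * ((i h - j h : ℕ) : ℝ) ≤
      D * (1 + μ * ε - μ * ((i h : ℝ) / r h)) := by
    have hr : (0 : ℝ) < r h := (Nat.cast_nonneg _).lt_of_ne'
      (right_ne_zero_of_mul (hw h ▸ hD.ne'))
    have hij : (i h : ℝ) / r h - ε ≤ ((i h : ℝ) - j h) / r h := by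
      rw [sub_div, sub_le_sub_iff_left, div_le_iff₀ hr]
      exact hj h
    rw [Nat.cast_sub (hji h)]
    calc _ = D * (1 - μ * (((i h : ℝ) - j h) / r h)) := by rw [← hw h]; field_simp; ring
      _ ≤ D * (1 - μ * ((i h : ℝ) / r h - ε)) := by gcongr
      _ = _ := by ring
  calc _ ≤ ∑ h, D * (1 + μ * ε - μ * ((i h : ℝ) / r h)) := Finset.sum_le_sum fun h _ ↦ hterm h
    _ = D * (Fintype.card ι * (1 + μ * ε) - μ * ∑ h, (i h : ℝ) / r h) := by
      rw [← Finset.mul_sum, Finset.sum_sub_distrib, ← Finset.mul_sum, Finset.sum_const,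
        Finset.card_univ, nsmul_eq_mul]
    _ < D * (Fintype.card ι * (1 + μ * ε) - μ * ((1 / 2 - ε) * Fintype.card ι)) := by gcongr
    _ = 0 := by linear_combination (-D * Fintype.card ι) * hμε

variable {ρ : ℝ} {x : ℕ → ℚ} {Q : ℕ → ℝ} {d : ℕ} {μ : ℝ}

lemma eventually_hasseEval_shift_eq_zero [DecidableEq ι] {r : ι → ℕ} {c : BoxIndex r → ℤ}
    {G j : ι → ℕ} {D : ℕ} {ε : ℝ} (hQ : Tendsto Q atTop atTop)
    (hQd : (fun k ↦ Q (k + 1)) =Θ[atTop] fun k ↦ Q k ^ d)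
    (hden : (fun k ↦ ((x k).den : ℝ)) =O[atTop] Q)
    (happ : (fun k ↦ (x k : ℝ) - ρ) =O[atTop] fun k ↦ Q k ^ (-μ))
    (hD : 0 < D) (hG : ∀ h, d ^ G h * r h = D)
    (hμ : 0 < μ) (hμε : μ * (1 / 2 - 2 * ε) = 1)
    (hc : ∀ i : BoxIndex r, ∑ h, (i h : ℝ) / r h ≤ (1 / 2 - ε) * Fintype.card ι →
      hasseEval r (fun a ↦ (c a : ℝ)) (fun h ↦ i h) (fun _ ↦ ρ) = 0)
    (hj : ∀ h, (j h : ℝ) ≤ ε * r h) :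
    ∀ᶠ k in atTop, hasseEval r (fun a ↦ (c a : ℚ)) j (fun h ↦ x (k + G h)) = 0 := by
  have hG' (h : ι) : (d : ℝ) ^ G h * r h = D := mod_cast hG h
  have hden' (h : ι) : (fun k ↦ ((x (k + G h)).den : ℝ)) =O[atTop] fun k ↦ Q k ^ (d : ℝ) ^ G h := by
    simpa using isBigO_rpow_shift hQ hQd (β := 1) (by simpa using hden) (G h)
  have happ' (h : ι) : (fun k ↦ (x (k + G h) : ℝ) - ρ) =O[atTop]
      fun k ↦ Q k ^ ((d : ℝ) ^ G h * -μ) := isBigO_rpow_shift hQ hQd happ (G h)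
  refine eventually_hasseEval_eq_zero (ρ := fun _ ↦ ρ) (y := fun h k ↦ x (k + G h))
    fun i hi hji ↦ ?_
  have hneg : ∑ h, ((d : ℝ) ^ G h * r h + (d : ℝ) ^ G h * -μ * ((i h - j h : ℕ) : ℝ)) < 0 :=
    sum_weights_neg (by positivity) hG' hμ hμε hj hji (lt_of_not_ge fun hle ↦ hi (hc i hle))
  exact tendsto_prod_pow_mul_pow_zero hQ hden' happ' hneg

theorem transcendental_of_rat_approx (hx : Function.Injective x) (hQ : Tendsto Q atTop atTop)
    (hd : 2 ≤ d) (hQd : (fun k ↦ Q (k + 1)) =Θ[atTop] fun k ↦ Q k ^ d)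
    (hden : (fun k ↦ ((x k).den : ℝ)) =O[atTop] Q) (hμ : 2 < μ)
    (happ : (fun k ↦ (x k : ℝ) - ρ) =O[atTop] fun k ↦ Q k ^ (-μ)) : Transcendental ℚ ρ := by
  intro hρ
  set ε : ℝ := 1 / 4 - 1 / (2 * μ) with hεdef
  have hμε : μ * (1 / 2 - 2 * ε) = 1 := by rw [hεdef]; field_simp; ring
  have hε : 0 < ε := by
    rw [hεdef, sub_pos, div_lt_div_iff₀ (by positivity) (by positivity)]
    linarith
  obtain ⟨m, hm⟩ := exists_nat_gt
    ((Module.finrank ℚ (IntermediateField.adjoin ℚ {ρ}) : ℝ) / (4 * ε ^ 2))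
  rw [div_lt_iff₀' (by positivity)] at hm
  obtain ⟨e, he⟩ := exists_prod_Ioi_le (f := fun n ↦ ε * (d : ℝ) ^ n)
    (g := fun n ↦ (d : ℝ) ^ n + 1)
    ((tendsto_pow_atTop_atTop_of_one_lt (by exact_mod_cast hd)).const_mul_atTop hε) m
  let r (h : Fin m) : ℕ := d ^ e h
  let G (h : Fin m) : ℕ := ∑ h', e h' - e h
  have hr (h : Fin m) : r h ≠ 0 := pow_ne_zero _ (by omega)
  have hG (h : Fin m) : d ^ G h * r h = d ^ ∑ h', e h' := by
    rw [← pow_add, Nat.sub_add_cancel (Finset.single_le_sum_of_canonicallyOrdered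
      (Finset.mem_univ h))]
  obtain ⟨c, hc0, hc⟩ := exists_int_hasseEval_eq_zero_of_isAlgebraic hρ hr hε.le (by simpa using hm)
  have hne := eventually_exists_hasseEval_ne_zero r (c := fun a ↦ (c a : ℚ))
    (fun h0 ↦ hc0 (funext fun a ↦ by simpa using congrFun h0 a)) (l := atTop)
    (x := fun h k ↦ x (k + G h)) fun h ↦ by
      rw [← Nat.cofinite_eq_atTop]
      exact (hx.comp (add_left_injective (G h))).tendsto_cofinite
  have hzero : ∀ᶠ k in atTop, ∀ j ∈ Fintype.piFinset fun h ↦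
      Finset.range (∏ h' ∈ Finset.Ioi h, (r h' + 1)),
      hasseEval r (fun a ↦ (c a : ℚ)) j (fun h ↦ x (k + G h)) = 0 := by
    refine (Filter.eventually_all_finset _).mpr fun j hj ↦ ?_
    refine eventually_hasseEval_shift_eq_zero hQ hQd hden happ (by positivity) hG
      (by linarith) hμε (by simpa using hc) fun h ↦ ?_
    have hjh : (j h : ℝ) ≤ ∏ h' ∈ Finset.Ioi h, ((r h' : ℝ) + 1) := by
      exact_mod_cast (Finset.mem_range.mp (Fintype.mem_piFinset.mp hj h)).le
    simpa [r] using hjh.trans (by simpa [r] using he h)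
  obtain ⟨k, ⟨j, hj, hjne⟩, hk⟩ := (hne.and hzero).exists
  exact hjne (hk j (Fintype.mem_piFinset.mpr fun h ↦ Finset.mem_range.mpr (hj h)))

end Criterion

section ContinuedFractionMatrices

/-- The `2 × 2` matrix of one step of a continued fraction with partial quotient `n`. -/
def cfMatrix (n : ℕ) : Matrix (Fin 2) (Fin 2) ℝ := !![(n : ℝ), 1; 1, 0]

/-- The product of the continued fraction matrices of `t 0, …, t (n - 1)`. -/
def cfMatrixProd (t : ℕ → ℕ) : ℕ → Matrix (Fin 2) (Fin 2) ℝ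
  | 0 => 1
  | n + 1 => cfMatrixProd t n * cfMatrix (t n)

lemma cfMatrixProd_add (t : ℕ → ℕ) (n m : ℕ) :
    cfMatrixProd t (n + m) = cfMatrixProd t n * cfMatrixProd (fun i ↦ t (n + i)) m := by
  induction m with
  | zero => simp [cfMatrixProd]
  | succ m ih => rw [← add_assoc, cfMatrixProd, ih, cfMatrixProd, Matrix.mul_assoc]

lemma cfMatrixProd_congr {t t' : ℕ → ℕ} {n : ℕ} (h : ∀ i < n, t i = t' i) :
    cfMatrixProd t n = cfMatrixProd t' n := by
  induction n with
  | zero => rfl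
  | succ n ih =>
    rw [cfMatrixProd, cfMatrixProd, ih fun i hi ↦ h i (hi.trans n.lt_succ_self), h n n.lt_succ_self]

-- `cfNum` and `cfDen` ignore `t 0`, which therefore appears as an integer part.
lemma cfMatrixProd_add_two (t : ℕ → ℕ) (n : ℕ) :
    cfMatrixProd t (n + 2) =
      !![(t 0 : ℝ) * cfDen t (n + 1) + cfNum t (n + 1), (t 0 : ℝ) * cfDen t n + cfNum t n;
        (cfDen t (n + 1) : ℝ), (cfDen t n : ℝ)] := by
  induction n with
  | zero => simp [cfMatrixProd, cfMatrix, cfDen, cfNum]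
  | succ n ih =>
    rw [cfMatrixProd, ih, cfMatrix, Matrix.mul_fin_two]
    simp only [cfDen, cfNum]
    push_cast
    ext i j
    fin_cases i <;> fin_cases j <;> simp <;> ring

lemma cfDen_pos {t : ℕ → ℕ} (ht : 0 < t 1) : ∀ n, 0 < cfDen t n
  | 0 => one_pos
  | 1 => ht
  | n + 2 => Nat.add_pos_right _ (cfDen_pos ht n)

end ContinuedFractionMatrices

section ThueMorse

/-- The Thue–Morse sequence on the alphabet `{a, b}`, starting with `thueMorse a b 0 = b`. -/
def thueMorse (a b n : ℕ) : ℕ := if Odd (Nat.digits 2 n).sum then a else b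

lemma odd_sum_digits_two_mul_add {n e : ℕ} (he : e < 2) :
    Odd (Nat.digits 2 (2 * n + e)).sum ↔ (e = 1 ↔ ¬ Odd (Nat.digits 2 n).sum) := by
  obtain ⟨rfl, rfl⟩ | hne : (e = 0 ∧ n = 0) ∨ (e ≠ 0 ∨ n ≠ 0) := by omega
  · simp
  · rw [add_comm, Nat.digits_add 2 one_lt_two e n he hne, List.sum_cons]
    interval_cases e <;> simp [Nat.odd_add']

lemma odd_sum_digits_two_pow_add {k i : ℕ} (hi : i < 2 ^ k) :
    Odd (Nat.digits 2 (2 ^ k + i)).sum ↔ ¬ Odd (Nat.digits 2 i).sum := by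
  induction k generalizing i with
  | zero =>
    obtain rfl : i = 0 := by simpa using hi
    simp
  | succ k ih =>
    have hhalf : i / 2 < 2 ^ k := by rw [pow_succ] at hi; omega
    have hsplit : 2 ^ (k + 1) + i = 2 * (2 ^ k + i / 2) + i % 2 := by rw [pow_succ]; omega
    have hmod := Nat.mod_lt i two_pos
    have hi2 := odd_sum_digits_two_mul_add (n := i / 2) hmod
    rw [Nat.div_add_mod] at hi2
    rw [hsplit, odd_sum_digits_two_mul_add hmod, ih hhalf, hi2]
    tauto

variable {a b : ℕ}

lemma thueMorse_two_pow_add {k i : ℕ} (hi : i < 2 ^ k) :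
    thueMorse a b (2 ^ k + i) = thueMorse b a i := by
  simp only [thueMorse, odd_sum_digits_two_pow_add hi, ite_not]

lemma cfMatrixProd_thueMorse_two_pow_succ (a b k : ℕ) :
    cfMatrixProd (thueMorse a b) (2 ^ (k + 1)) =
      cfMatrixProd (thueMorse a b) (2 ^ k) * cfMatrixProd (thueMorse b a) (2 ^ k) := by
  rw [pow_succ, mul_two, cfMatrixProd_add, cfMatrixProd_congr fun i hi ↦ thueMorse_two_pow_add hi]

/-- The matrix shape preserved by the doublings of `cfMatrixProd (thueMorse a b)`: `T` is the
trace, `σ` the scale of the part which is symmetric in `a` and `b`, and `δ` the scale of the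
antisymmetric part. -/
noncomputable def traceForm (a b T σ δ : ℝ) : Matrix (Fin 2) (Fin 2) ℝ :=
  !![(T + a * b * σ) / 2, ((a + b) * σ + (b - a) * δ) / 2;
    ((a + b) * σ - (b - a) * δ) / 2, (T - a * b * σ) / 2]

lemma traceForm_mul_mul {a b T σ δ w : ℝ} (hw : w = ((a * b) ^ 2 + (a + b) ^ 2) * σ ^ 2)
    (hdet : T ^ 2 + (b - a) ^ 2 * δ ^ 2 = 4 + w) :
    (traceForm a b T σ δ * traceForm b a T σ δ) * (traceForm b a T σ δ * traceForm a b T σ δ) =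
      traceForm a b (T ^ 2 * w + 2) (T * σ * (w + 2)) (T * w * δ) := by
  subst hw
  simp only [traceForm, Matrix.mul_fin_two]
  ext i j
  fin_cases i <;> fin_cases j <;>
    simp only [Fin.zero_eta, Fin.mk_one, Matrix.of_apply, Matrix.cons_val', Matrix.cons_val_zero,
      Matrix.cons_val_one, Matrix.cons_val_fin_one]
  · linear_combination (T * (a * b * σ) / 4 + 1 / 2 +
      (T ^ 2 + (b - a) ^ 2 * δ ^ 2 - 4 - ((a * b) ^ 2 + (a + b) ^ 2) * σ ^ 2) / 16) * hdet
  · linear_combination T * (a + b) * σ / 4 * hdet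
  · linear_combination T * (a + b) * σ / 4 * hdet
  · linear_combination (-T * (a * b * σ) / 4 + 1 / 2 +
      (T ^ 2 + (b - a) ^ 2 * δ ^ 2 - 4 - ((a * b) ^ 2 + (a + b) ^ 2) * σ ^ 2) / 16) * hdet

mutual

/-- The trace of `cfMatrixProd (thueMorse a b) (2 ^ (2 * k + 1))`. -/
def thueMorseTrace (a b : ℕ) : ℕ → ℕ
  | 0 => a * b + 2
  | k + 1 => thueMorseTrace a b k ^ 2 *
      (((a * b) ^ 2 + (a + b) ^ 2) * thueMorseScale a b k ^ 2) + 2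

/-- The coefficient `σ` of `cfMatrixProd (thueMorse a b) (2 ^ (2 * k + 1))` in `traceForm`, which
is the common order of magnitude of its entries. -/
def thueMorseScale (a b : ℕ) : ℕ → ℕ
  | 0 => 1
  | k + 1 => thueMorseTrace a b k * thueMorseScale a b k *
      (((a * b) ^ 2 + (a + b) ^ 2) * thueMorseScale a b k ^ 2 + 2)

end

/-- The trace of `cfMatrixProd (thueMorse a b) (2 ^ (2 * k + 2))`, minus `2`. In terms of it the
recursion for `thueMorseTrace` is the classical Thue–Morse trace map. -/
def thueMorseGap (a b k : ℕ) : ℕ := ((a * b) ^ 2 + (a + b) ^ 2) * thueMorseScale a b k ^ 2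

/-- The ratio `δ / σ` of the antisymmetric to the symmetric scale of
`cfMatrixProd (thueMorse a b) (2 ^ (2 * k + 1))`, see `traceForm`. -/
def thueMorseRatio (a b : ℕ) : ℕ → ℚ
  | 0 => 1
  | k + 1 => thueMorseRatio a b k * (thueMorseGap a b k / (thueMorseGap a b k + 2))

lemma thueMorseTrace_succ (a b k : ℕ) :
    thueMorseTrace a b (k + 1) = thueMorseTrace a b k ^ 2 * thueMorseGap a b k + 2 := rfl

lemma thueMorseScale_succ (a b k : ℕ) : thueMorseScale a b (k + 1) =
    thueMorseTrace a b k * thueMorseScale a b k * (thueMorseGap a b k + 2) := rfl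

lemma thueMorseRatio_succ (a b k : ℕ) : thueMorseRatio a b (k + 1) =
    thueMorseRatio a b k * (thueMorseGap a b k / (thueMorseGap a b k + 2)) := rfl

lemma cast_thueMorseGap (a b k : ℕ) : (thueMorseGap a b k : ℝ) =
    (((a : ℝ) * b) ^ 2 + ((a : ℝ) + b) ^ 2) * (thueMorseScale a b k : ℝ) ^ 2 := by
  simp [thueMorseGap]

lemma thueMorseScale_mul_ratio_succ (a b k : ℕ) :
    (thueMorseScale a b (k + 1) : ℝ) * thueMorseRatio a b (k + 1) =
      thueMorseTrace a b k * thueMorseGap a b k *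
        (thueMorseScale a b k * thueMorseRatio a b k) := by
  rw [thueMorseScale_succ, thueMorseRatio_succ]
  push_cast
  field_simp

lemma thueMorseTrace_sq_add (a b k : ℕ) :
    (thueMorseTrace a b k : ℝ) ^ 2 +
      ((b : ℝ) - a) ^ 2 * (thueMorseScale a b k * thueMorseRatio a b k) ^ 2 =
        4 + thueMorseGap a b k := by
  induction k with
  | zero =>
    simp only [thueMorseTrace, thueMorseScale, thueMorseRatio, thueMorseGap]
    push_cast
    ring
  | succ k ih =>
    rw [cast_thueMorseGap, thueMorseScale_mul_ratio_succ, thueMorseTrace_succ,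
      thueMorseScale_succ]
    have hgap := cast_thueMorseGap a b k
    push_cast
    linear_combination (thueMorseTrace a b k : ℝ) ^ 2 * thueMorseGap a b k ^ 2 * ih +
      (thueMorseTrace a b k : ℝ) ^ 2 * (thueMorseGap a b k + 2) ^ 2 * hgap

lemma cfMatrixProd_thueMorse_two (a b : ℕ) :
    cfMatrixProd (thueMorse a b) 2 = traceForm a b (a * b + 2) 1 1 := by
  ext i j
  fin_cases i <;> fin_cases j <;>
    simp [cfMatrixProd, cfMatrix, thueMorse, traceForm] <;> ring

lemma cfMatrixProd_thueMorse_eq_traceForm (a b k : ℕ) :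
    cfMatrixProd (thueMorse a b) (2 ^ (2 * k + 1)) =
        traceForm a b (thueMorseTrace a b k) (thueMorseScale a b k)
          (thueMorseScale a b k * thueMorseRatio a b k) ∧
      cfMatrixProd (thueMorse b a) (2 ^ (2 * k + 1)) =
        traceForm b a (thueMorseTrace a b k) (thueMorseScale a b k)
          (thueMorseScale a b k * thueMorseRatio a b k) := by
  induction k with
  | zero =>
    simpa [thueMorseTrace, thueMorseScale, thueMorseRatio, mul_comm (b : ℝ) a] using
      And.intro (cfMatrixProd_thueMorse_two a b) (cfMatrixProd_thueMorse_two b a)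
  | succ k ih =>
    have hdet := thueMorseTrace_sq_add a b k
    have hgap := cast_thueMorseGap a b k
    simp only [thueMorseScale_mul_ratio_succ]
    simp only [show 2 * (k + 1) + 1 = 2 * k + 1 + 1 + 1 by ring,
      cfMatrixProd_thueMorse_two_pow_succ, ih.1, ih.2, thueMorseScale_succ, thueMorseTrace_succ]
    push_cast
    refine ⟨traceForm_mul_mul hgap hdet, traceForm_mul_mul ?_ ?_⟩
    · rw [hgap]; ring
    · linear_combination hdet

lemma thueMorseTrace_pos (a b k : ℕ) : 0 < thueMorseTrace a b k := by
  cases k <;> simp [thueMorseTrace]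

lemma thueMorseScale_pos (a b k : ℕ) : 0 < thueMorseScale a b k := by
  induction k with
  | zero => exact one_pos
  | succ k ih =>
    exact mul_pos (mul_pos (thueMorseTrace_pos a b k) ih) (Nat.succ_pos _)

lemma two_mul_thueMorseScale_le (a b k : ℕ) :
    2 * thueMorseScale a b k ≤ thueMorseScale a b (k + 1) := by
  rw [thueMorseScale_succ]
  calc 2 * thueMorseScale a b k = 1 * thueMorseScale a b k * 2 := by ring
    _ ≤ _ := by gcongr <;> [exact thueMorseTrace_pos a b k; omega]

lemma two_pow_mul_thueMorseScale_le (a b k n : ℕ) :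
    2 ^ n * thueMorseScale a b k ≤ thueMorseScale a b (k + n) := by
  induction n with
  | zero => simp
  | succ n ih =>
    calc 2 ^ (n + 1) * thueMorseScale a b k = 2 * (2 ^ n * thueMorseScale a b k) := by ring
      _ ≤ 2 * thueMorseScale a b (k + n) := by gcongr
      _ ≤ thueMorseScale a b (k + n + 1) := two_mul_thueMorseScale_le a b _

lemma tendsto_thueMorseScale (a b : ℕ) : Tendsto (thueMorseScale a b) atTop atTop := by
  refine (strictMono_nat_of_lt_succ fun k ↦ ?_).tendsto_atTop
  have hpos := thueMorseScale_pos a b k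
  have hdouble := two_mul_thueMorseScale_le a b k
  omega

lemma thueMorseScale_sq_le_gap (ha : 0 < a) (k : ℕ) :
    thueMorseScale a b k ^ 2 ≤ thueMorseGap a b k :=
  Nat.le_mul_of_pos_left _ (by positivity)

lemma thueMorseGap_pos (ha : 0 < a) (k : ℕ) : 0 < thueMorseGap a b k :=
  (pow_pos (thueMorseScale_pos a b k) 2).trans_le (thueMorseScale_sq_le_gap ha k)

lemma thueMorseRatio_pos (ha : 0 < a) (k : ℕ) : 0 < thueMorseRatio a b k := by
  induction k with
  | zero => exact one_pos
  | succ k ih =>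
    have := thueMorseGap_pos (b := b) ha k
    exact mul_pos ih (by positivity)

lemma thueMorseRatio_sub_succ (a b k : ℕ) : thueMorseRatio a b k - thueMorseRatio a b (k + 1) =
    thueMorseRatio a b k * 2 / (thueMorseGap a b k + 2) := by
  rw [thueMorseRatio_succ]
  field_simp
  ring

lemma strictAnti_thueMorseRatio (ha : 0 < a) : StrictAnti (thueMorseRatio a b) := by
  refine strictAnti_nat_of_succ_lt fun k ↦ sub_pos.mp ?_
  have := thueMorseRatio_pos (b := b) ha k
  rw [thueMorseRatio_sub_succ]
  positivity

lemma thueMorseRatio_le_one (ha : 0 < a) (k : ℕ) : thueMorseRatio a b k ≤ 1 :=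
  (strictAnti_thueMorseRatio ha).antitone k.zero_le

lemma thueMorseScale_le_trace (ha : 0 < a) (hb : 0 < b) (k : ℕ) :
    thueMorseScale a b k ≤ thueMorseTrace a b k := by
  have hinv := thueMorseTrace_sq_add a b k
  rw [cast_thueMorseGap] at hinv
  have hx0 : (0 : ℝ) < thueMorseRatio a b k := by exact_mod_cast thueMorseRatio_pos ha k
  have hx1 : (thueMorseRatio a b k : ℝ) ≤ 1 := by exact_mod_cast thueMorseRatio_le_one ha k
  have ha1 : (1 : ℝ) ≤ a := by exact_mod_cast ha
  have hb1 : (1 : ℝ) ≤ b := by exact_mod_cast hb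
  have hcoeff : ((b : ℝ) - a) ^ 2 + 1 ≤ (a * b) ^ 2 + (a + b) ^ 2 := by
    nlinarith [one_le_mul_of_one_le_of_one_le ha1 hb1]
  have hδ : ((thueMorseScale a b k : ℝ) * thueMorseRatio a b k) ^ 2 ≤ thueMorseScale a b k ^ 2 := by
    gcongr
    exact mul_le_of_le_one_right (by positivity) hx1
  have hsq : (thueMorseScale a b k : ℝ) ^ 2 ≤ thueMorseTrace a b k ^ 2 := by
    nlinarith [mul_le_mul_of_nonneg_left hδ (sq_nonneg ((b : ℝ) - a)),
      mul_le_mul_of_nonneg_right hcoeff (sq_nonneg (thueMorseScale a b k : ℝ))]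
  exact_mod_cast le_of_sq_le_sq hsq (by positivity)

lemma tendsto_cast_thueMorseScale (a b : ℕ) :
    Tendsto (fun k ↦ (thueMorseScale a b k : ℝ)) atTop atTop :=
  tendsto_natCast_atTop_atTop.comp (tendsto_thueMorseScale a b)

lemma isTheta_thueMorseGap_add_two (ha : 0 < a) (b : ℕ) :
    (fun k ↦ (thueMorseGap a b k + 2 : ℝ)) =Θ[atTop] fun k ↦ (thueMorseScale a b k : ℝ) ^ 2 := by
  have htwo : (fun _ ↦ (2 : ℝ)) =o[atTop] fun k ↦ (thueMorseScale a b k : ℝ) ^ 2 :=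
    isLittleO_const_left.mpr <| .inr <| tendsto_norm_atTop_atTop.comp <|
      (tendsto_pow_atTop two_ne_zero).comp (tendsto_cast_thueMorseScale a b)
  refine IsTheta.add_isLittleO ?_ htwo
  simp only [cast_thueMorseGap]
  exact (isTheta_refl _ _).const_mul_left (by positivity)

lemma isTheta_thueMorseTrace (ha : 0 < a) (hb : 0 < b) :
    (fun k ↦ (thueMorseTrace a b k : ℝ)) =Θ[atTop] fun k ↦ (thueMorseScale a b k : ℝ) := by
  refine ⟨IsBigO.of_pow two_ne_zero ?_, .of_norm_le fun k ↦ ?_⟩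
  · refine (IsBigO.of_bound 2 (.of_forall fun k ↦ ?_)).trans (isTheta_thueMorseGap_add_two ha b).1
    have hinv := thueMorseTrace_sq_add a b k
    rw [Pi.pow_apply, Real.norm_of_nonneg (by positivity), Real.norm_of_nonneg (by positivity)]
    have : 0 ≤ ((b : ℝ) - a) ^ 2 * (thueMorseScale a b k * thueMorseRatio a b k) ^ 2 := by
      positivity
    have : (0 : ℝ) ≤ thueMorseGap a b k := by positivity
    linarith
  · simpa using thueMorseScale_le_trace ha hb k

lemma isTheta_thueMorseScale_succ (ha : 0 < a) (hb : 0 < b) :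
    (fun k ↦ (thueMorseScale a b (k + 1) : ℝ)) =Θ[atTop]
      fun k ↦ (thueMorseScale a b k : ℝ) ^ 4 := by
  have hpow (s : ℝ) : s ^ 4 = s * s * s ^ 2 := by ring
  simp only [thueMorseScale_succ, hpow]
  push_cast
  exact ((isTheta_thueMorseTrace ha hb).mul (isTheta_refl _ _)).mul
    (isTheta_thueMorseGap_add_two ha b)

lemma den_thueMorseRatio_succ_le (a b k : ℕ) :
    (thueMorseRatio a b (k + 1)).den ≤ (thueMorseRatio a b k).den * (thueMorseGap a b k + 2) := by
  rw [thueMorseRatio_succ]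
  refine (Nat.le_of_dvd (by positivity) (Rat.mul_den_dvd _ _)).trans ?_
  gcongr
  have hdvd := Rat.den_dvd (thueMorseGap a b k) (thueMorseGap a b k + 2)
  rw [Rat.divInt_eq_div] at hdvd
  push_cast at hdvd
  exact Nat.le_of_dvd (by positivity) (by exact_mod_cast hdvd)

lemma eventually_thueMorseGap_add_two_le (ha : 0 < a) (hb : 0 < b) :
    ∀ᶠ k in atTop, thueMorseGap a b k + 2 ≤ thueMorseTrace a b k ^ 3 := by
  have hlittle : (fun k ↦ (thueMorseGap a b k + 2 : ℝ)) =o[atTop]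
      fun k ↦ (thueMorseTrace a b k : ℝ) ^ 3 :=
    (isTheta_thueMorseGap_add_two ha b).trans_isLittleO <|
      ((isLittleO_pow_pow_atTop_of_lt (by norm_num : 2 < 3)).comp_tendsto
        (tendsto_cast_thueMorseScale a b)).trans_isTheta ((isTheta_thueMorseTrace ha hb).pow 3).symm
  filter_upwards [hlittle.bound one_pos] with k hk
  rw [one_mul, Real.norm_of_nonneg (by positivity), Real.norm_of_nonneg (by positivity)] at hk
  exact_mod_cast hk

lemma isBigO_den_thueMorseRatio (ha : 0 < a) (hb : 0 < b) :
    (fun k ↦ ((thueMorseRatio a b k).den : ℝ)) =O[atTop]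
      fun k ↦ (thueMorseScale a b k : ℝ) ^ (3 / 4 : ℝ) := by
  obtain ⟨K, hK⟩ := eventually_atTop.mp (eventually_thueMorseGap_add_two_le ha hb)
  have hbound (k : ℕ) (hk : K ≤ k) : (thueMorseRatio a b k).den ^ 4 ≤
      (thueMorseRatio a b K).den ^ 4 * thueMorseScale a b k ^ 3 := by
    induction k, hk using Nat.le_induction with
    | base => exact Nat.le_mul_of_pos_right _ (pow_pos (thueMorseScale_pos a b K) 3)
    | succ k hk ih =>
      rw [thueMorseScale_succ]
      calc (thueMorseRatio a b (k + 1)).den ^ 4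
          ≤ ((thueMorseRatio a b k).den * (thueMorseGap a b k + 2)) ^ 4 := by
            gcongr; exact den_thueMorseRatio_succ_le a b k
        _ = (thueMorseRatio a b k).den ^ 4 * (thueMorseGap a b k + 2) ^ 3 *
              (thueMorseGap a b k + 2) := by ring
        _ ≤ (thueMorseRatio a b K).den ^ 4 * thueMorseScale a b k ^ 3 *
              (thueMorseGap a b k + 2) ^ 3 * thueMorseTrace a b k ^ 3 := by
            gcongr; exact hK k hk
        _ = _ := by ring
  refine IsBigO.of_pow four_ne_zero (.of_bound ((thueMorseRatio a b K).den ^ 4) ?_)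
  filter_upwards [eventually_ge_atTop K] with k hk
  rw [Pi.pow_apply, Pi.pow_apply, ← Real.rpow_mul_natCast (by positivity),
    Real.norm_of_nonneg (by positivity), Real.norm_of_nonneg (by positivity)]
  norm_num
  exact_mod_cast hbound k hk

lemma dist_thueMorseRatio_succ_le (ha : 0 < a) (k : ℕ) :
    dist (thueMorseRatio a b k : ℝ) (thueMorseRatio a b (k + 1)) ≤
      2 / (thueMorseScale a b k : ℝ) ^ 2 := by
  have hx0 := thueMorseRatio_pos (b := b) ha k
  have hx1 : (thueMorseRatio a b k : ℝ) ≤ 1 := by exact_mod_cast thueMorseRatio_le_one ha k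
  have hsub := congrArg ((↑) : ℚ → ℝ) (thueMorseRatio_sub_succ a b k)
  have hgap : (thueMorseScale a b k : ℝ) ^ 2 ≤ thueMorseGap a b k := by
    exact_mod_cast thueMorseScale_sq_le_gap ha k
  have hσ := thueMorseScale_pos a b k
  push_cast at hsub
  rw [Real.dist_eq, hsub, abs_of_nonneg (by positivity)]
  gcongr <;> linarith

lemma isBigO_thueMorseRatio_sub (ha : 0 < a) {ρ : ℝ}
    (hρ : Tendsto (fun k ↦ (thueMorseRatio a b k : ℝ)) atTop (𝓝 ρ)) :
    (fun k ↦ (thueMorseRatio a b k : ℝ) - ρ) =O[atTop]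
      fun k ↦ (thueMorseScale a b k : ℝ) ^ (-2 : ℝ) := by
  refine .of_bound 4 (.of_forall fun k ↦ ?_)
  rw [Real.rpow_neg (by positivity), Real.rpow_two, norm_inv, ← div_eq_mul_inv, norm_pow,
    RCLike.norm_natCast, ← dist_eq_norm]
  refine dist_le_of_le_geometric_two_of_tendsto₀ (f := fun n ↦ (thueMorseRatio a b (k + n) : ℝ))
    (fun n ↦ (dist_thueMorseRatio_succ_le ha (k + n)).trans ?_)
    (by simpa only [add_comm k] using (tendsto_add_atTop_iff_nat k).mpr hρ)
  have hσ := thueMorseScale_pos a b k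
  have hpow : (1 : ℝ) ≤ 2 ^ n := one_le_pow₀ one_le_two
  have hgrow : (2 : ℝ) ^ n * thueMorseScale a b k ≤ thueMorseScale a b (k + n) := by
    exact_mod_cast two_pow_mul_thueMorseScale_le a b k n
  calc 2 / (thueMorseScale a b (k + n) : ℝ) ^ 2
      ≤ 2 / (2 ^ n * thueMorseScale a b k : ℝ) ^ 2 := by gcongr
    _ = 2 / ((2 ^ n) ^ 2 * (thueMorseScale a b k : ℝ) ^ 2) := by rw [mul_pow]
    _ ≤ 2 / (2 ^ n * (thueMorseScale a b k : ℝ) ^ 2) := by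
        gcongr; exact le_self_pow₀ hpow two_ne_zero
    _ = 4 / (thueMorseScale a b k : ℝ) ^ 2 / 2 / 2 ^ n := by field_simp; norm_num

theorem transcendental_of_tendsto_thueMorseRatio (ha : 0 < a) (hb : 0 < b) {ρ : ℝ}
    (hρ : Tendsto (fun k ↦ (thueMorseRatio a b k : ℝ)) atTop (𝓝 ρ)) : Transcendental ℚ ρ := by
  have hσ (k : ℕ) : (0 : ℝ) ≤ thueMorseScale a b k := by positivity
  refine transcendental_of_rat_approx (Q := fun k ↦ (thueMorseScale a b k : ℝ) ^ (3 / 4 : ℝ))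
    (d := 4) (μ := 8 / 3) (strictAnti_thueMorseRatio ha).injective
    ((tendsto_rpow_atTop (by norm_num)).comp (tendsto_cast_thueMorseScale a b)) (by norm_num) ?_
    (isBigO_den_thueMorseRatio ha hb) (by norm_num) ?_
  · convert (isTheta_thueMorseScale_succ ha hb).rpow (r := 3 / 4) (.of_forall fun k ↦ hσ (k + 1))
      (.of_forall fun k ↦ pow_nonneg (hσ k) 4) using 2 with k
    rw [← Real.rpow_mul_natCast (hσ _), ← Real.rpow_natCast_mul (hσ _)]
    norm_num
  · convert isBigO_thueMorseRatio_sub ha hρ using 2 with k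
    rw [← Real.rpow_mul (hσ _)]
    norm_num

/-- The ratio `δ / σ` of a matrix `traceForm a b T σ δ` with column ratios `u` and `v`. -/
noncomputable def antisymmRatio (a b u v : ℝ) : ℝ :=
  (u * v * (a + b) - 2 * (a * b) * v - (a + b)) / ((b - a) * (1 + u * v))

lemma eq_antisymmRatio_of_traceForm_eq {a b T σ x u v q₁ q₀ : ℝ} (hab : a ≠ b) (hσ : σ ≠ 0)
    (huv : 1 + u * v ≠ 0) (h : traceForm a b T σ (σ * x) = !![u * q₁, v * q₀; q₁, q₀]) :
    x = antisymmRatio a b u v := by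
  simp only [traceForm, ← Matrix.ext_iff, Fin.forall_fin_two, Matrix.of_apply, Matrix.cons_val',
    Matrix.cons_val_zero, Matrix.cons_val_one, Matrix.cons_val_fin_one] at h
  obtain ⟨⟨h₀₀, h₀₁⟩, h₁₀, h₁₁⟩ := h
  rw [antisymmRatio, eq_div_iff (mul_ne_zero (sub_ne_zero.mpr hab.symm) huv)]
  refine mul_left_cancel₀ hσ ?_
  linear_combination 2 * v * h₀₀ + 2 * h₀₁ - 2 * u * v * h₁₀ - 2 * v * h₁₁

lemma tendsto_antisymmRatio {a b ξ : ℝ} (hab : a ≠ b) {u v : ℕ → ℝ}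
    (hu : Tendsto u atTop (𝓝 ξ)) (hv : Tendsto v atTop (𝓝 ξ)) :
    Tendsto (fun k ↦ antisymmRatio a b (u k) (v k)) atTop (𝓝 (antisymmRatio a b ξ ξ)) := by
  have hne : (b - a) * (1 + ξ * ξ) ≠ 0 :=
    mul_ne_zero (sub_ne_zero.mpr hab.symm) (by nlinarith [mul_self_nonneg ξ])
  exact ((((hu.mul hv).mul_const _).sub (hv.const_mul _)).sub_const _).div
    (((hu.mul hv).const_add _).const_mul _) hne

lemma isAlgebraic_antisymmRatio (a b : ℕ) {ξ : ℝ} (hξ : IsAlgebraic ℚ ξ) :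
    IsAlgebraic ℚ (antisymmRatio a b ξ ξ) := by
  have ha : IsAlgebraic ℚ (a : ℝ) := isAlgebraic_natCast a
  have hb : IsAlgebraic ℚ (b : ℝ) := isAlgebraic_natCast b
  have htwo : IsAlgebraic ℚ (2 : ℝ) := by exact_mod_cast isAlgebraic_natCast 2
  exact ((((hξ.mul hξ).mul (ha.add hb)).sub ((htwo.mul (ha.mul hb)).mul hξ)).sub (ha.add hb)).mul
    ((hb.sub ha).mul (isAlgebraic_one.add (hξ.mul hξ))).inv

lemma thueMorseRatio_eq_antisymmRatio (ha : 0 < a) (hab : a ≠ b) {k n : ℕ}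
    (hn : n + 2 = 2 ^ (2 * k + 1)) :
    (thueMorseRatio a b k : ℝ) = antisymmRatio a b
      (b + cfNum (thueMorse a b) (n + 1) / cfDen (thueMorse a b) (n + 1))
      (b + cfNum (thueMorse a b) n / cfDen (thueMorse a b) n) := by
  have hone : 0 < thueMorse a b 1 := by simpa [thueMorse] using ha
  have hcol (m : ℕ) : (b : ℝ) * cfDen (thueMorse a b) m + cfNum (thueMorse a b) m =
      (b + cfNum (thueMorse a b) m / cfDen (thueMorse a b) m) * cfDen (thueMorse a b) m := by
    have hden : (cfDen (thueMorse a b) m : ℝ) ≠ 0 := by exact_mod_cast (cfDen_pos hone m).ne'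
    rw [add_mul, div_mul_cancel₀ _ hden]
  have hmatrix := (cfMatrixProd_thueMorse_eq_traceForm a b k).1.symm
  rw [← hn, cfMatrixProd_add_two, show thueMorse a b 0 = b by simp [thueMorse], hcol,
    hcol] at hmatrix
  have hσ : (thueMorseScale a b k : ℝ) ≠ 0 := by exact_mod_cast (thueMorseScale_pos a b k).ne'
  exact eq_antisymmRatio_of_traceForm_eq (by exact_mod_cast hab) hσ (by positivity) hmatrix

lemma tendsto_thueMorseRatio (ha : 0 < a) (hab : a ≠ b) {α : ℝ}
    (hα : Tendsto (fun n ↦ (cfNum (thueMorse a b) n : ℝ) / cfDen (thueMorse a b) n) atTop (𝓝 α)) :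
    Tendsto (fun k ↦ (thueMorseRatio a b k : ℝ)) atTop
      (𝓝 (antisymmRatio a b (b + α) (b + α))) := by
  have hle (k : ℕ) : k + 2 ≤ 2 ^ (2 * k + 1) := by
    have := (2 * k).lt_two_pow_self
    rw [pow_succ]
    omega
  have hindex : Tendsto (fun k : ℕ ↦ 2 ^ (2 * k + 1) - 2) atTop atTop :=
    tendsto_atTop_mono (fun k ↦ Nat.le_sub_of_add_le (hle k)) tendsto_id
  refine (tendsto_antisymmRatio (by exact_mod_cast hab)
    ((hα.const_add _).comp ((tendsto_add_atTop_nat 1).comp hindex))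
    ((hα.const_add _).comp hindex)).congr fun k ↦ ?_
  exact (thueMorseRatio_eq_antisymmRatio ha hab
    (Nat.sub_add_cancel ((Nat.le_add_left 2 k).trans (hle k)))).symm

end ThueMorse

/-- The continued fraction whose partial quotients follow the Thue–Morse sequence on the
alphabet `{a, b}` of two distinct positive integers (with `t n = a` when the sum of the
binary digits of `n` is odd and `t n = b` when it is even) is transcendental. -/
theorem statement15 (a b : ℕ) (ha : 0 < a) (hb : 0 < b) (hab : a ≠ b)
    (t : ℕ → ℕ)
    (ht : ∀ n : ℕ, t n = if Odd ((Nat.digits 2 n).sum) then a else b)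
    (α : ℝ)
    (hα : Tendsto (fun n => (cfNum t n : ℝ) / cfDen t n) atTop (𝓝 α)) :
    Transcendental ℚ α := by
  obtain rfl : t = thueMorse a b := funext ht
  have htrans := transcendental_of_tendsto_thueMorseRatio ha hb (tendsto_thueMorseRatio ha hab hα)
  exact fun halg ↦ htrans (isAlgebraic_antisymmRatio a b ((isAlgebraic_natCast b).add halg))
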